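/- Under Assumptions 1 and 2, let L > 0 be such that c is 1/(4L)-cocoercive on P. Suppose the initial valuation satisfies s^0 ∈ ℝ^K (all entries finite) and the step sizes are constant, η^t = η for all t ≥ 0, with 0 < η < 1/(2 r L). Then the CumLog sequence p^t converges (in ℝ^K) to a point p* belonging to P*. -/

import Mathlib

open Finset Filter Topology

/-! Let `x` be an equilibrium. Along a CumLog orbit the log-probabilities move, up to a constant on
each fibre of `ω`, by `-rη c(p^t)`, so the three-point identity for the relative entropy, combined
with Pinsker's inequality and cocoercivity, gives
`D(x, p^{t+1}) ≤ D(x, p^t) - rη ((μ - rη/2) ‖c(p^t) - c(x)‖² + ⟨c(x), p^{t+1} - x⟩)`.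
Both terms in the bracket are nonnegative and hence tend to zero, which forces every cluster point
of `p^t` to be an equilibrium. Applying the monotonicity of `D(x, p^t)` to such a cluster point `x`
yields `D(x, p^t) → 0`, and `p^t → x` by Pinsker's inequality. That an equilibrium exists to start
from is the theorem of Hartman and Stampacchia for monotone maps. -/

section VariationalInequality

open Matrix

lemma exists_forall_apply_nonpos_of_apply_self_nonpos {V : Type*} [AddCommGroup V] [Module ℝ V]
    [TopologicalSpace V] [IsTopologicalAddGroup V] [ContinuousSMul ℝ V] [T2Space V]
    [FiniteDimensional ℝ V] {S : Set V} (hne : S.Nonempty) (hconv : Convex ℝ S)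
    (hcomp : IsCompact S) (B : V →ₗ[ℝ] V →ₗ[ℝ] ℝ) (hB : ∀ x ∈ S, B x x ≤ 0) :
    ∃ x ∈ S, ∀ y ∈ S, B x y ≤ 0 := by
  have hcont (f : V →ₗ[ℝ] ℝ) : ContinuousOn f S := f.continuous_of_finiteDimensional.continuousOn
  obtain ⟨x, hx, z, hz, hxz⟩ :=
    Sion.exists_isSaddlePointOn (f := fun x y => B x y) hne hconv hcomp
      (fun y _ => (hcont (B.flip y)).lowerSemicontinuousOn)
      (fun y _ => ((B.flip y).convexOn hconv).quasiconvexOn) hconv hne hcomp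
      (fun x _ => (hcont (B x)).upperSemicontinuousOn)
      (fun x _ => ((B x).concaveOn hconv).quasiconcaveOn)
  exact ⟨x, hx, fun y hy => (hxz z hz y hy).trans (hB z hz)⟩

lemma exists_mem_convexHull_forall_apply_sub_nonpos {ι V : Type*} [Finite ι] [Nonempty ι]
    [AddCommGroup V] [Module ℝ V] (y : ι → V) (G : ι → Module.Dual ℝ V)
    (hG : ∀ i j, 0 ≤ (G i - G j) (y i - y j)) :
    ∃ x ∈ convexHull ℝ (Set.range y), ∀ j, G j (x - y j) ≤ 0 := by
  classical
  cases nonempty_fintype ι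
  let A : Matrix ι ι ℝ := .of fun i j => G j (y i - y j)
  have apply_eq (w v : ι → ℝ) :
      Matrix.toLinearMap₂' ℝ A w v = ∑ i, ∑ j, w i * v j * G j (y i - y j) := by
    simp [Matrix.toLinearMap₂'_apply, A, mul_assoc]
  have apply_self_nonpos (w) (hw : w ∈ stdSimplex ℝ ι) : Matrix.toLinearMap₂' ℝ A w w ≤ 0 := by
    have symmetrized : 2 * Matrix.toLinearMap₂' ℝ A w w =
        ∑ i, ∑ j, w i * w j * -(G i - G j) (y i - y j) := by
      calc 2 * Matrix.toLinearMap₂' ℝ A w w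
          = (∑ i, ∑ j, w i * w j * G j (y i - y j))
            + ∑ i, ∑ j, w j * w i * G i (y j - y i) := by
            rw [two_mul, apply_eq, sum_comm]
        _ = ∑ i, ∑ j, w i * w j * -(G i - G j) (y i - y j) := by
            simp only [← sum_add_distrib, map_sub, LinearMap.sub_apply]
            exact sum_congr rfl fun i _ => sum_congr rfl fun j _ => by ring
    have : 2 * Matrix.toLinearMap₂' ℝ A w w ≤ 0 := symmetrized ▸
      sum_nonpos fun i _ => sum_nonpos fun j _ =>
        mul_nonpos_of_nonneg_of_nonpos (mul_nonneg (hw.1 i) (hw.1 j)) (neg_nonpos.2 (hG i j))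
    linarith
  obtain ⟨w, hw, hwA⟩ := exists_forall_apply_nonpos_of_apply_self_nonpos
    ⟨_, single_mem_stdSimplex ℝ (Classical.arbitrary ι)⟩ (convex_stdSimplex ℝ ι)
    (isCompact_stdSimplex ℝ ι) (Matrix.toLinearMap₂' ℝ A) apply_self_nonpos
  refine ⟨∑ i, w i • y i, (convex_convexHull ℝ _).sum_mem (fun i _ => hw.1 i) hw.2
    fun i _ => subset_convexHull ℝ _ ⟨i, rfl⟩, fun j => ?_⟩
  have sub_eq : ∑ i, w i • y i - y j = ∑ i, w i • (y i - y j) := by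
    simp only [smul_sub, sum_sub_distrib, ← sum_smul, hw.2, one_smul]
  simpa [sub_eq, apply_eq, Pi.single_apply] using hwA _ (single_mem_stdSimplex ℝ j)

variable {V : Type*} [AddCommGroup V] [Module ℝ V] [TopologicalSpace V] [IsTopologicalAddGroup V]
  {S : Set V} {F : V → StrongDual ℝ V}

lemma exists_forall_apply_sub_nonpos_of_monotone (hne : S.Nonempty) (hconv : Convex ℝ S)
    (hcomp : IsCompact S) (hF : ∀ x ∈ S, ∀ y ∈ S, 0 ≤ (F x - F y) (x - y)) :
    ∃ x ∈ S, ∀ y ∈ S, F y (x - y) ≤ 0 := by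
  have finite_intersection (T : Finset S) :
      (S ∩ ⋂ y ∈ T, {x | F y (x - y) ≤ 0}).Nonempty := by
    rcases T.eq_empty_or_nonempty with rfl | hT
    · simpa using hne
    have := hT.to_subtype
    obtain ⟨x, hx, hxT⟩ := exists_mem_convexHull_forall_apply_sub_nonpos
      (fun y : T => (y : V)) (fun y => (F y : Module.Dual ℝ V))
      (fun y z => hF y y.1.2 z z.1.2)
    refine ⟨x, convexHull_min ?_ hconv hx, Set.mem_iInter₂.2 fun y hy => hxT ⟨y, hy⟩⟩
    rintro _ ⟨y, rfl⟩
    exact y.1.2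
  obtain ⟨x, hx, hxS⟩ := hcomp.inter_iInter_nonempty (fun y : S => {x | F y (x - y) ≤ 0})
    (fun y => isClosed_le (by fun_prop) continuous_const) finite_intersection
  exact ⟨x, hx, fun y hy => Set.mem_iInter.1 hxS ⟨y, hy⟩⟩

-- Minty's trick: test the hypothesis at `x + t (y - x)`, divide by `t` and let `t → 0⁺`.
lemma forall_apply_sub_nonneg_of_forall_apply_sub_nonpos [ContinuousSMul ℝ V]
    (hconv : Convex ℝ S) (hcont : ∀ v, ContinuousOn (fun y => F y v) S) {x : V} (hx : x ∈ S)
    (hxS : ∀ y ∈ S, F y (x - y) ≤ 0) {y : V} (hy : y ∈ S) : 0 ≤ F x (y - x) := by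
  let z : ℝ → V := fun t => x + t • (y - x)
  have hz_mem {t : ℝ} (ht : t ∈ Set.Ioo 0 1) : z t ∈ S :=
    hconv.add_smul_sub_mem hx hy ⟨ht.1.le, ht.2.le⟩
  have h_eventually : ∀ᶠ t : ℝ in 𝓝[>] 0, t ∈ Set.Ioo 0 1 := Ioo_mem_nhdsGT one_pos
  have hz_tendsto : Tendsto z (𝓝[>] 0) (𝓝[S] x) := by
    refine tendsto_nhdsWithin_iff.2 ⟨?_, h_eventually.mono fun t => hz_mem⟩
    have : Continuous z := by fun_prop
    simpa [z] using (this.tendsto 0).mono_left nhdsWithin_le_nhds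
  refine ge_of_tendsto ((hcont (y - x) x hx).tendsto.comp hz_tendsto) ?_
  filter_upwards [h_eventually] with t ht
  have : -(t * F (z t) (y - x)) ≤ 0 := by simpa [z] using hxS (z t) (hz_mem ht)
  exact nonneg_of_mul_nonneg_right (neg_nonpos.1 this) ht.1

theorem exists_forall_apply_sub_nonneg_of_monotone [ContinuousSMul ℝ V] (hne : S.Nonempty)
    (hconv : Convex ℝ S) (hcomp : IsCompact S) (hcont : ∀ v, ContinuousOn (fun y => F y v) S)
    (hF : ∀ x ∈ S, ∀ y ∈ S, 0 ≤ (F x - F y) (x - y)) :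
    ∃ x ∈ S, ∀ y ∈ S, 0 ≤ F x (y - x) := by
  obtain ⟨x, hx, hxS⟩ := exists_forall_apply_sub_nonpos_of_monotone hne hconv hcomp hF
  exact ⟨x, hx, fun _ => forall_apply_sub_nonneg_of_forall_apply_sub_nonpos hconv hcont hx hxS⟩

end VariationalInequality

section Sequences

lemma tendsto_zero_of_le_sub_succ {D g : ℕ → ℝ} (hD : ∀ t, 0 ≤ D t) (hg : ∀ t, 0 ≤ g t)
    (hgD : ∀ t, g t ≤ D t - D (t + 1)) : Tendsto g atTop (𝓝 0) := by
  have hanti : Antitone D := antitone_nat_of_succ_le fun t => by linarith [hg t, hgD t]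
  have hlim := tendsto_atTop_ciInf hanti ⟨0, Set.forall_mem_range.2 hD⟩
  have hdiff := hlim.sub (hlim.comp (tendsto_add_atTop_nat 1))
  rw [sub_self] at hdiff
  exact squeeze_zero hg hgD hdiff

lemma tendsto_iff_tendsto_sum_sq_sub {α ι : Type*} [Fintype ι] {l : Filter α} {f : α → ι → ℝ}
    {x : ι → ℝ} :
    Tendsto f l (𝓝 x) ↔ Tendsto (fun a => ∑ i, (f a i - x i) ^ 2) l (𝓝 0) := by
  constructor <;> intro h
  · have : Continuous fun v : ι → ℝ => ∑ i, (v i - x i) ^ 2 := by fun_prop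
    simpa [Function.comp_def] using (this.tendsto x).comp h
  refine tendsto_pi_nhds.2 fun i => tendsto_sub_nhds_zero_iff.1 ?_
  refine squeeze_zero_norm (fun a => Real.abs_le_sqrt ?_) (by simpa using h.sqrt)
  exact single_le_sum (f := fun i => (f a i - x i) ^ 2) (fun _ _ => sq_nonneg _) (mem_univ i)

end Sequences

section RelativeEntropy

open Matrix

lemma tangent_add_sq_le_of_strongConvexOn {s : Set ℝ} {m f' x y : ℝ} {f : ℝ → ℝ}
    (hf : StrongConvexOn s m f) (hx : x ∈ s) (hy : y ∈ s) (hf' : HasDerivAt f f' x) :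
    f x + f' * (y - x) + m / 2 * (y - x) ^ 2 ≤ f y := by
  have hconv := strongConvexOn_iff_convex.1 hf
  have hderiv : HasDerivAt (fun z => f z - m / 2 * ‖z‖ ^ 2) (f' - m * x) x := by
    simp only [Real.norm_eq_abs, sq_abs]
    refine (hf'.sub ((hasDerivAt_pow 2 x).const_mul (m / 2))).congr_deriv ?_
    ring
  rcases lt_trichotomy x y with hxy | rfl | hxy
  · have hslope := hconv.le_slope_of_hasDerivAt hx hy hxy hderiv
    rw [slope_def_field, le_div_iff₀ (sub_pos.2 hxy)] at hslope
    simp only [Real.norm_eq_abs, sq_abs] at hslope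
    linarith
  · simp
  · have hslope := hconv.slope_le_of_hasDerivAt hy hx hxy hderiv
    rw [slope_def_field, div_le_iff₀ (sub_pos.2 hxy)] at hslope
    simp only [Real.norm_eq_abs, sq_abs] at hslope
    linarith

lemma strongConvexOn_mul_log : StrongConvexOn (Set.Icc 0 1) 1 fun x => x * Real.log x := by
  have hderiv {x : ℝ} (hx : x ≠ 0) :
      HasDerivAt (fun x => x * Real.log x - 1 / 2 * x ^ 2) (Real.log x + 1 - x) x :=
    ((Real.hasDerivAt_mul_log hx).sub ((hasDerivAt_pow 2 x).const_mul (1 / 2))).congr_deriv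
      (by ring)
  have hderiv2 {x : ℝ} (hx : x ≠ 0) :
      HasDerivAt (fun x => Real.log x + 1 - x) (x⁻¹ - 1) x :=
    ((Real.hasDerivAt_log hx).add_const 1).sub (hasDerivAt_id x)
  refine strongConvexOn_iff_convex.2 ?_
  simp only [Real.norm_eq_abs, sq_abs]
  refine convexOn_of_hasDerivWithinAt2_nonneg (convex_Icc 0 1)
    (Real.continuous_mul_log.sub (by fun_prop)).continuousOn (f' := fun x => Real.log x + 1 - x)
    (f'' := fun x => x⁻¹ - 1) ?_ ?_ ?_ <;> rw [interior_Icc] <;> intro x hx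
  · exact (hderiv hx.1.ne').hasDerivWithinAt
  · exact (hderiv2 hx.1.ne').hasDerivWithinAt
  · exact sub_nonneg.2 ((one_le_inv₀ hx.1).2 hx.2.le)

variable {K : Type*} [Fintype K] {a b x : K → ℝ}

/-- The relative entropy (Kullback–Leibler divergence) `∑ k, a k * (log (a k) - log (b k))` of
nonnegative vectors, written with the junk value `log 0 = 0`: this gives the terms with `a k = 0`
their usual value `0`, but `relativeEntropy a b` is meaningful only when `b` is positive. -/
noncomputable def relativeEntropy (a b : K → ℝ) : ℝ :=
  a ⬝ᵥ (Real.log ∘ a - Real.log ∘ b)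

lemma sum_sq_sub_div_two_le_relativeEntropy (ha : ∀ k, a k ∈ Set.Icc 0 1)
    (hb : ∀ k, b k ∈ Set.Ioc 0 1) (hab : ∑ k, b k ≤ ∑ k, a k) :
    (∑ k, (b k - a k) ^ 2) / 2 ≤ relativeEntropy a b := by
  have termwise (k) : (b k - a k) ^ 2 / 2 ≤
      a k * (Real.log (a k) - Real.log (b k)) + (b k - a k) := by
    have := tangent_add_sq_le_of_strongConvexOn strongConvexOn_mul_log
      (Set.Ioc_subset_Icc_self (hb k)) (ha k) (Real.hasDerivAt_mul_log (hb k).1.ne')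
    linarith
  calc (∑ k, (b k - a k) ^ 2) / 2
      ≤ ∑ k, (a k * (Real.log (a k) - Real.log (b k)) + (b k - a k)) := by
        rw [sum_div]
        exact sum_le_sum fun k _ => termwise k
    _ = relativeEntropy a b + (∑ k, b k - ∑ k, a k) := by
        rw [sum_add_distrib, sum_sub_distrib]
        rfl
    _ ≤ relativeEntropy a b := by linarith

lemma relativeEntropy_eq_sub_add (a x y : K → ℝ) :
    relativeEntropy a y = relativeEntropy a x - relativeEntropy y x
      + (a - y) ⬝ᵥ (Real.log ∘ x - Real.log ∘ y) := by
  simp only [relativeEntropy, sub_dotProduct, dotProduct_sub]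
  ring

lemma tendsto_relativeEntropy_zero {α : Type*} {l : Filter α} {f : α → K → ℝ}
    (hf : Tendsto f l (𝓝 x)) : Tendsto (fun t => relativeEntropy x (f t)) l (𝓝 0) := by
  have hself : relativeEntropy x x = 0 := by simp [relativeEntropy]
  rw [← hself]
  refine tendsto_finsetSum _ fun k _ => ?_
  rcases eq_or_ne (x k) 0 with hk | hk
  · simpa [hk] using tendsto_const_nhds
  · exact (((tendsto_pi_nhds.1 hf k).log hk).const_sub _).const_mul _

end RelativeEntropy

section FiberSimplex

open Matrix

variable {W K : Type*} [Fintype K] [DecidableEq W] {ω : K → W} {a b : K → ℝ}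

/-- The product over the fibres of `ω` of their probability simplices: the strategy set of the
routing game whose routes `K` are partitioned into OD pairs by `ω`. -/
def fiberSimplex (ω : K → W) : Set (K → ℝ) :=
  {p | (∀ k, 0 ≤ p k) ∧ ∀ w, ∑ k with ω k = w, p k = 1}

lemma le_one_of_mem_fiberSimplex (ha : a ∈ fiberSimplex ω) (k : K) : a k ≤ 1 :=
  ha.2 (ω k) ▸ single_le_sum (fun j _ => ha.1 j) (mem_filter.2 ⟨mem_univ k, rfl⟩)

lemma convex_fiberSimplex (ω : K → W) : Convex ℝ (fiberSimplex ω) := by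
  refine fun x hx y hy α β hα hβ hαβ => ⟨fun k => ?_, fun w => ?_⟩
  · exact add_nonneg (mul_nonneg hα (hx.1 k)) (mul_nonneg hβ (hy.1 k))
  · simp [sum_add_distrib, ← mul_sum, hx.2 w, hy.2 w, hαβ]

lemma isCompact_fiberSimplex (ω : K → W) : IsCompact (fiberSimplex ω) := by
  have hclosed : IsClosed (fiberSimplex ω) := by
    simp only [fiberSimplex, Set.ofPred_and, Set.ofPred_forall]
    exact (isClosed_iInter fun k => isClosed_le (by fun_prop) (by fun_prop)).inter
      (isClosed_iInter fun w => isClosed_eq (by fun_prop) (by fun_prop))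
  exact (isCompact_univ_pi fun _ => isCompact_Icc).of_isClosed_subset hclosed
    fun p hp k _ => ⟨hp.1 k, le_one_of_mem_fiberSimplex hp k⟩

lemma sub_dotProduct_comp_eq_zero (ha : a ∈ fiberSimplex ω) (hb : b ∈ fiberSimplex ω)
    (m : W → ℝ) : (a - b) ⬝ᵥ (m ∘ ω) = 0 := by
  have fiberwise : (a - b) ⬝ᵥ (m ∘ ω) =
      ∑ w ∈ univ.image ω, ∑ k with ω k = w, (a - b) k * m (ω k) :=
    (sum_fiberwise_of_maps_to (fun k _ => mem_image_of_mem ω (mem_univ k)) _).symm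
  refine fiberwise.trans (sum_eq_zero fun w _ => ?_)
  calc ∑ k with ω k = w, (a - b) k * m (ω k)
      = (∑ k with ω k = w, (a - b) k) * m w := by
        rw [sum_mul]
        exact sum_congr rfl fun k hk => by rw [(mem_filter.1 hk).2]
    _ = 0 := by simp [ha.2 w, hb.2 w]

lemma sum_eq_sum_of_mem_fiberSimplex (ha : a ∈ fiberSimplex ω) (hb : b ∈ fiberSimplex ω) :
    ∑ k, a k = ∑ k, b k := by
  simpa [dotProduct, sub_eq_zero] using sub_dotProduct_comp_eq_zero ha hb 1

lemma sum_sq_sub_div_two_le_relativeEntropy_of_mem_fiberSimplex (ha : a ∈ fiberSimplex ω)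
    (hb : b ∈ fiberSimplex ω) (hb_pos : ∀ k, 0 < b k) :
    (∑ k, (b k - a k) ^ 2) / 2 ≤ relativeEntropy a b :=
  sum_sq_sub_div_two_le_relativeEntropy (fun k => ⟨ha.1 k, le_one_of_mem_fiberSimplex ha k⟩)
    (fun k => ⟨hb_pos k, le_one_of_mem_fiberSimplex hb k⟩)
    (sum_eq_sum_of_mem_fiberSimplex hb ha).le

lemma relativeEntropy_nonneg_of_mem_fiberSimplex (ha : a ∈ fiberSimplex ω)
    (hb : b ∈ fiberSimplex ω) (hb_pos : ∀ k, 0 < b k) : 0 ≤ relativeEntropy a b :=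
  (div_nonneg (sum_nonneg fun _ _ => sq_nonneg _) zero_le_two).trans
    (sum_sq_sub_div_two_le_relativeEntropy_of_mem_fiberSimplex ha hb hb_pos)

lemma tendsto_relativeEntropy_zero_iff_of_mem_fiberSimplex {α : Type*} {l : Filter α}
    {f : α → K → ℝ} (ha : a ∈ fiberSimplex ω) (hf : ∀ t, f t ∈ fiberSimplex ω)
    (hf_pos : ∀ t k, 0 < f t k) :
    Tendsto (fun t => relativeEntropy a (f t)) l (𝓝 0) ↔ Tendsto f l (𝓝 a) := by
  refine ⟨fun h => tendsto_iff_tendsto_sum_sq_sub.2 ?_, tendsto_relativeEntropy_zero⟩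
  refine squeeze_zero (fun _ => sum_nonneg fun _ _ => sq_nonneg _) (fun t => ?_)
    (by simpa using h.mul_const 2)
  exact (div_le_iff₀ two_pos).1
    (sum_sq_sub_div_two_le_relativeEntropy_of_mem_fiberSimplex ha (hf t) (hf_pos t))

end FiberSimplex

section LogitChoice

open Matrix

variable {W K : Type*} [Fintype K] [DecidableEq W] {ω : K → W}

/-- The sum of `exp (-r * s k)` over the fibre of `ω` above `w`, the denominator of the logit
choice. -/
noncomputable def logitNormalizer (ω : K → W) (r : ℝ) (s : K → ℝ) (w : W) : ℝ :=
  ∑ k with ω k = w, Real.exp (-r * s k)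

/-- The logit choice `q_r(s)` with sensitivity `r` for the route valuations `s`. -/
noncomputable def logitChoice (ω : K → W) (r : ℝ) (s : K → ℝ) (k : K) : ℝ :=
  Real.exp (-r * s k) / logitNormalizer ω r s (ω k)

lemma logitNormalizer_pos (ω : K → W) (r : ℝ) (s : K → ℝ) (k : K) :
    0 < logitNormalizer ω r s (ω k) :=
  sum_pos (fun _ _ => Real.exp_pos _) ⟨k, mem_filter.2 ⟨mem_univ k, rfl⟩⟩

lemma logitChoice_pos (ω : K → W) (r : ℝ) (s : K → ℝ) (k : K) : 0 < logitChoice ω r s k :=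
  div_pos (Real.exp_pos _) (logitNormalizer_pos ω r s k)

lemma logitChoice_mem_fiberSimplex (hω : Function.Surjective ω) (r : ℝ) (s : K → ℝ) :
    logitChoice ω r s ∈ fiberSimplex ω := by
  refine ⟨fun k => (logitChoice_pos ω r s k).le, hω.forall.2 fun j => ?_⟩
  calc ∑ k with ω k = ω j, logitChoice ω r s k
      = ∑ k with ω k = ω j, Real.exp (-r * s k) / logitNormalizer ω r s (ω j) :=
        sum_congr rfl fun k hk => by rw [logitChoice, (mem_filter.1 hk).2]
    _ = 1 := by
        rw [← sum_div]
        exact div_self (logitNormalizer_pos ω r s j).ne'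

lemma log_comp_logitChoice (ω : K → W) (r : ℝ) (s : K → ℝ) :
    Real.log ∘ logitChoice ω r s = -r • s - (Real.log ∘ logitNormalizer ω r s) ∘ ω := by
  ext k
  simp [logitChoice, Real.log_div (Real.exp_ne_zero _) (logitNormalizer_pos ω r s k).ne']

lemma relativeEntropy_logitChoice {a : K → ℝ} (ha : a ∈ fiberSimplex ω)
    (hω : Function.Surjective ω) (r : ℝ) (s s' : K → ℝ) :
    relativeEntropy a (logitChoice ω r s') = relativeEntropy a (logitChoice ω r s)
      - relativeEntropy (logitChoice ω r s') (logitChoice ω r s)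
      + r * ((s' - s) ⬝ᵥ (a - logitChoice ω r s')) := by
  have hs' := logitChoice_mem_fiberSimplex hω r s'
  rw [relativeEntropy_eq_sub_add a (logitChoice ω r s)]
  congr 1
  simp only [log_comp_logitChoice, dotProduct_sub, sub_dotProduct_comp_eq_zero ha hs',
    dotProduct_smul, smul_eq_mul, dotProduct_comm (s' - s)]
  ring

end LogitChoice

section Cocoercive

open Matrix

variable {K : Type*} [Fintype K] {c : (K → ℝ) → K → ℝ} {S : Set (K → ℝ)} {μ : ℝ} {x : K → ℝ}

/-- The solutions of the variational inequality with map `c` over `S`; for the cost map of a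
routing game over its strategy set, the Wardrop equilibria `P*`. -/
def viSolutions (c : (K → ℝ) → K → ℝ) (S : Set (K → ℝ)) : Set (K → ℝ) :=
  {x ∈ S | ∀ y ∈ S, 0 ≤ c x ⬝ᵥ (y - x)}

/-- `μ`-cocoercivity of `c` on `S` for the Euclidean structure of `K → ℝ`, with the squared norm
written as a sum because `K → ℝ` carries the sup norm. -/
def IsCocoerciveOn (μ : ℝ) (c : (K → ℝ) → K → ℝ) (S : Set (K → ℝ)) : Prop :=
  ∀ x ∈ S, ∀ y ∈ S, μ * ∑ k, (c y k - c x k) ^ 2 ≤ (c y - c x) ⬝ᵥ (y - x)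

lemma mul_dotProduct_le_sum_sq_add_sum_sq (θ : ℝ) (u v : K → ℝ) :
    θ * (u ⬝ᵥ v) ≤ (θ ^ 2 * ∑ k, u k ^ 2 + ∑ k, v k ^ 2) / 2 := by
  rw [dotProduct, mul_sum, mul_sum, ← sum_add_distrib, sum_div]
  refine sum_le_sum fun k _ => ?_
  linarith [two_mul_le_add_sq (θ * u k) (v k)]

lemma IsCocoerciveOn.sq_mul_sum_sq_le (hc : IsCocoerciveOn μ c S) (hμ : 0 ≤ μ) (hx : x ∈ S)
    {y : K → ℝ} (hy : y ∈ S) :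
    μ ^ 2 * ∑ k, (c y k - c x k) ^ 2 ≤ ∑ k, (y k - x k) ^ 2 := by
  have young := mul_dotProduct_le_sum_sq_add_sum_sq μ (c y - c x) (y - x)
  have cocoercive := mul_le_mul_of_nonneg_left (hc x hx y hy) hμ
  simp only [Pi.sub_apply] at young
  linarith

lemma IsCocoerciveOn.continuousOn (hc : IsCocoerciveOn μ c S) (hμ : 0 < μ) :
    ContinuousOn c S := by
  intro x hx
  have hid : Tendsto (fun y : K → ℝ => ∑ k, (y k - x k) ^ 2) (𝓝[S] x) (𝓝 0) :=
    tendsto_iff_tendsto_sum_sq_sub.1 nhdsWithin_le_nhds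
  refine tendsto_iff_tendsto_sum_sq_sub.2 <| squeeze_zero'
    (.of_forall fun y => sum_nonneg fun _ _ => sq_nonneg _) ?_
    (by simpa using hid.div_const (μ ^ 2))
  filter_upwards [self_mem_nhdsWithin] with y hy
  exact (le_div_iff₀' (pow_pos hμ 2)).2 (hc.sq_mul_sum_sq_le hμ.le hx hy)

lemma IsCocoerciveOn.viSolutions_nonempty (hc : IsCocoerciveOn μ c S) (hμ : 0 < μ)
    (hne : S.Nonempty) (hconv : Convex ℝ S) (hcomp : IsCompact S) : (viSolutions c S).Nonempty := by
  let F : (K → ℝ) → StrongDual ℝ (K → ℝ) := fun y => ∑ k, c y k • ContinuousLinearMap.proj k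
  have F_apply (y v) : F y v = c y ⬝ᵥ v := by simp [F, dotProduct]
  have hcont (v : K → ℝ) : ContinuousOn (fun y => F y v) S := by
    simp only [F_apply]
    exact (continuous_id.dotProduct continuous_const).comp_continuousOn (hc.continuousOn hμ)
  have hmono : ∀ y ∈ S, ∀ z ∈ S, 0 ≤ (F y - F z) (y - z) := by
    intro y hy z hz
    rw [_root_.sub_apply, F_apply, F_apply, ← sub_dotProduct]
    exact (mul_nonneg hμ.le (sum_nonneg fun _ _ => sq_nonneg _)).trans (hc z hz y hy)
  simpa only [F_apply] using! exists_forall_apply_sub_nonneg_of_monotone hne hconv hcomp hcont hmono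

lemma mem_viSolutions_of_tendsto {α : Type*} {l : Filter α} [l.NeBot] {f : α → K → ℝ}
    {z : K → ℝ} (hcont : ContinuousOn c S) (hx : x ∈ viSolutions c S) (hf : ∀ t, f t ∈ S)
    (hz : z ∈ S) (hfz : Tendsto f l (𝓝 z)) (hcf : Tendsto (fun t => c (f t)) l (𝓝 (c x)))
    (hgap : Tendsto (fun t => c x ⬝ᵥ (f t - x)) l (𝓝 0)) : z ∈ viSolutions c S := by
  have cost_eq : c z = c x := tendsto_nhds_unique
    ((hcont z hz).tendsto.comp (tendsto_nhdsWithin_iff.2 ⟨hfz, .of_forall hf⟩)) hcf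
  have gap_eq : c x ⬝ᵥ (z - x) = 0 := by
    have : Continuous fun y => c x ⬝ᵥ (y - x) := by fun_prop
    exact tendsto_nhds_unique ((this.tendsto z).comp hfz) hgap
  refine ⟨hz, fun y hy => ?_⟩
  calc 0 ≤ c x ⬝ᵥ (y - x) := hx.2 y hy
    _ = c x ⬝ᵥ (y - x) - c x ⬝ᵥ (z - x) := by rw [gap_eq, sub_zero]
    _ = c z ⬝ᵥ (y - z) := by rw [cost_eq, ← dotProduct_sub, sub_sub_sub_cancel_right]

end Cocoercive

section CumLog

open Matrix

variable {W K : Type*} [Fintype K] [DecidableEq W] {ω : K → W} {c : (K → ℝ) → K → ℝ}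
  {μ r η : ℝ} {x : K → ℝ} {s : ℕ → K → ℝ}

/-- `s` is a sequence of valuations generated by the CumLog dynamics with constant step size `η`;
the strategies `p^t` are `logitChoice ω r (s t)`. -/
def IsCumLogOrbit (ω : K → W) (c : (K → ℝ) → K → ℝ) (r η : ℝ) (s : ℕ → K → ℝ) : Prop :=
  ∀ t, s (t + 1) = s t + η • c (logitChoice ω r (s t))

lemma IsCumLogOrbit.mul_add_le_relativeEntropy_sub (hs : IsCumLogOrbit ω c r η s)
    (hω : Function.Surjective ω) (hc : IsCocoerciveOn μ c (fiberSimplex ω)) (hrη : 0 ≤ r * η)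
    (hx : x ∈ fiberSimplex ω) (t : ℕ) :
    r * η * ((μ - r * η / 2) * ∑ k, (c (logitChoice ω r (s t)) k - c x k) ^ 2
        + c x ⬝ᵥ (logitChoice ω r (s (t + 1)) - x)) ≤
      relativeEntropy x (logitChoice ω r (s t))
        - relativeEntropy x (logitChoice ω r (s (t + 1))) := by
  have three_point := relativeEntropy_logitChoice hx hω r (s t) (s (t + 1))
  have hp := logitChoice_mem_fiberSimplex hω r (s t)
  have pinsker := sum_sq_sub_div_two_le_relativeEntropy_of_mem_fiberSimplex
    (logitChoice_mem_fiberSimplex hω r (s (t + 1))) hp (logitChoice_pos ω r (s t))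
  have step_eq : s (t + 1) - s t = η • c (logitChoice ω r (s t)) := by
    rw [hs t, add_sub_cancel_left]
  rw [step_eq, smul_dotProduct, smul_eq_mul] at three_point
  generalize logitChoice ω r (s t) = p at *
  generalize logitChoice ω r (s (t + 1)) = p' at *
  have cocoercive := mul_le_mul_of_nonneg_left (hc x hx p hp) hrη
  have young := mul_dotProduct_le_sum_sq_add_sum_sq (r * η) (c p - c x) (p - p')
  simp only [Pi.sub_apply, sub_dotProduct, dotProduct_sub] at three_point cocoercive young ⊢
  linarith

section Stable

variable (hs : IsCumLogOrbit ω c r η s) (hω : Function.Surjective ω)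
  (hc : IsCocoerciveOn μ c (fiberSimplex ω)) (hpos : 0 < r * η) (hstep : r * η < 2 * μ)
  (hx : x ∈ viSolutions c (fiberSimplex ω))
include hs hω hc hpos hstep hx

lemma IsCumLogOrbit.antitone_relativeEntropy :
    Antitone fun t => relativeEntropy x (logitChoice ω r (s t)) := by
  refine antitone_nat_of_succ_le fun t => sub_nonneg.1 ?_
  refine le_trans ?_ (hs.mul_add_le_relativeEntropy_sub hω hc hpos.le hx.1 t)
  have hgap := hx.2 _ (logitChoice_mem_fiberSimplex hω r (s (t + 1)))
  have hrate : 0 ≤ μ - r * η / 2 := by linarith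
  positivity

lemma IsCumLogOrbit.tendsto_cost :
    Tendsto (fun t => c (logitChoice ω r (s t))) atTop (𝓝 (c x)) := by
  have hrate : 0 < μ - r * η / 2 := by linarith
  refine tendsto_iff_tendsto_sum_sq_sub.2 <| tendsto_zero_of_le_sub_succ
    (D := fun t => relativeEntropy x (logitChoice ω r (s t)) / (r * η * (μ - r * η / 2)))
    (fun t => div_nonneg ?_ (by positivity)) (fun _ => sum_nonneg fun _ _ => sq_nonneg _)
    fun t => ?_
  · exact relativeEntropy_nonneg_of_mem_fiberSimplex hx.1 (logitChoice_mem_fiberSimplex hω r _)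
      (logitChoice_pos ω r _)
  · rw [← sub_div, le_div_iff₀' (by positivity)]
    have hgap := mul_nonneg hpos.le (hx.2 _ (logitChoice_mem_fiberSimplex hω r (s (t + 1))))
    linarith [hs.mul_add_le_relativeEntropy_sub hω hc hpos.le hx.1 t]

lemma IsCumLogOrbit.tendsto_gap :
    Tendsto (fun t => c x ⬝ᵥ (logitChoice ω r (s t) - x)) atTop (𝓝 0) := by
  refine (tendsto_add_atTop_iff_nat 1).1 <| tendsto_zero_of_le_sub_succ
    (D := fun t => relativeEntropy x (logitChoice ω r (s t)) / (r * η))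
    (fun t => div_nonneg ?_ hpos.le)
    (fun _ => hx.2 _ (logitChoice_mem_fiberSimplex hω r _)) fun t => ?_
  · exact relativeEntropy_nonneg_of_mem_fiberSimplex hx.1 (logitChoice_mem_fiberSimplex hω r _)
      (logitChoice_pos ω r _)
  · rw [← sub_div, le_div_iff₀' hpos]
    have hrate : 0 ≤ μ - r * η / 2 := by linarith
    have hcost : 0 ≤ r * η * ((μ - r * η / 2) *
      ∑ k, (c (logitChoice ω r (s t)) k - c x k) ^ 2) := by positivity
    linarith [hs.mul_add_le_relativeEntropy_sub hω hc hpos.le hx.1 t]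

lemma IsCumLogOrbit.tendsto_of_tendsto_subseq {φ : ℕ → ℕ} (hφ : StrictMono φ)
    (hlim : Tendsto (fun n => logitChoice ω r (s (φ n))) atTop (𝓝 x)) :
    Tendsto (fun t => logitChoice ω r (s t)) atTop (𝓝 x) := by
  refine (tendsto_relativeEntropy_zero_iff_of_mem_fiberSimplex hx.1
    (fun t => logitChoice_mem_fiberSimplex hω r (s t)) (fun t => logitChoice_pos ω r (s t))).1 ?_
  exact (tendsto_iff_tendsto_subseq_of_antitone
    (hs.antitone_relativeEntropy hω hc hpos hstep hx) hφ.tendsto_atTop).2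
    (tendsto_relativeEntropy_zero hlim)

end Stable

end CumLog

theorem stmt_8_general {W K : Type*} [Fintype K] [DecidableEq W] (ω : K → W)
    (hω : Function.Surjective ω) (c : (K → ℝ) → K → ℝ) {μ r η : ℝ}
    (hc : IsCocoerciveOn μ c (fiberSimplex ω)) (hpos : 0 < r * η) (hstep : r * η < 2 * μ)
    (s : ℕ → K → ℝ) (hs : IsCumLogOrbit ω c r η s) :
    ∃ pstar ∈ viSolutions c (fiberSimplex ω),
      Tendsto (fun t => logitChoice ω r (s t)) atTop (𝓝 pstar) := by
  have hμ : 0 < μ := by linarith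
  have hmem (t) := logitChoice_mem_fiberSimplex hω r (s t)
  obtain ⟨x, hx⟩ := hc.viSolutions_nonempty hμ ⟨_, hmem 0⟩ (convex_fiberSimplex ω)
    (isCompact_fiberSimplex ω)
  obtain ⟨z, hz, φ, hφ, hlim⟩ := (isCompact_fiberSimplex ω).tendsto_subseq hmem
  have hz_sol : z ∈ viSolutions c (fiberSimplex ω) :=
    mem_viSolutions_of_tendsto (hc.continuousOn hμ) hx (fun n => hmem (φ n)) hz hlim
      ((hs.tendsto_cost hω hc hpos hstep hx).comp hφ.tendsto_atTop)
      ((hs.tendsto_gap hω hc hpos hstep hx).comp hφ.tendsto_atTop)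
  exact ⟨z, hz_sol, hs.tendsto_of_tendsto_subseq hω hc hpos hstep hz_sol hφ hlim⟩

theorem stmt_8
    {W K E : Type*} [Fintype W] [Fintype K] [Fintype E]
    [DecidableEq W] [DecidableEq E]
    [Nonempty W] [Nonempty K]
    (ω : K → W) (hω : Function.Surjective ω)
    (Λ : E → K → ℝ) (hΛ : ∀ e k, Λ e k = 0 ∨ Λ e k = 1)
    (d : W → ℝ) (hd : ∀ w, 0 < d w)
    (u : (E → ℝ) → (E → ℝ))
    (P : Set (K → ℝ))
    (hP : P = {p : K → ℝ | (∀ k, 0 ≤ p k) ∧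
      ∀ w, ∑ k ∈ Finset.univ.filter (fun k => ω k = w), p k = 1})
    (Λbar : E → K → ℝ) (hΛbar : ∀ e k, Λbar e k = d (ω k) * Λ e k)
    (c : (K → ℝ) → K → ℝ)
    (hc : ∀ p k, c p k = ∑ e, Λ e k * u (fun e' => ∑ k', Λbar e' k' * p k') e)
    (X : Set (E → ℝ)) (hX : X = (fun p e => ∑ k, Λbar e k * p k) '' P)
    (hu1 : ∃ U : Set (E → ℝ), IsOpen U ∧ X ⊆ U ∧ ContDiffOn ℝ 2 u U)
    (hu2 : ∀ x ∈ X,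
      (∀ v : E → ℝ, 0 ≤ ∑ i, ∑ j, v i * (fderiv ℝ u x (Pi.single j (1 : ℝ)) i) * v j) ∧
      (∀ v : E → ℝ, 0 ≤ ∑ i, ∑ j,
        v i * (∑ m, fderiv ℝ u x (Pi.single m (1 : ℝ)) i *
          fderiv ℝ u x (Pi.single j (1 : ℝ)) m) * v j))
    (L : ℝ) (hL : 0 < L)
    (hcoco : ∀ a ∈ P, ∀ b ∈ P,
      (1 / (4 * L)) * ∑ k, (c b k - c a k) ^ 2 ≤ ∑ k, (c b k - c a k) * (b k - a k))
    (q : ℝ → (K → ℝ) → K → ℝ)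
    (hq : ∀ (rr : ℝ) (ss : K → ℝ) (k : K),
      q rr ss k = Real.exp (-rr * ss k) /
        ∑ k' ∈ Finset.univ.filter (fun k' => ω k' = ω k), Real.exp (-rr * ss k'))
    (Pstar : Set (K → ℝ))
    (hPstar : Pstar = {ps ∈ P | ∀ pp ∈ P, 0 ≤ ∑ k, c ps k * (pp k - ps k)})
    (r : ℝ) (hr : 0 < r)
    (ηc : ℝ) (hηc : 0 < ηc) (hηcL : ηc < 1 / (2 * r * L))
    (s : ℕ → K → ℝ) (p : ℕ → K → ℝ)
    (hp : ∀ t, p t = q r (s t))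
    (hs : ∀ t, s (t + 1) = fun k => s t k + ηc * c (p t) k) :
    ∃ pstar ∈ Pstar, Tendsto p atTop (nhds pstar) := by
  subst hP hPstar
  obtain rfl : p = fun t => logitChoice ω r (s t) :=
    funext fun t => (hp t).trans (funext (hq r (s t)))
  exact stmt_8_general ω hω c hcoco (mul_pos hr hηc) (by field_simp at hηcL ⊢; linarith) s hs
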